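/- Let L₊ and L₋ be countable linear orders that are convex-biembeddable, i.e., there exist convex embeddings f₊ : L₊ → L₋ and f₋ : L₋ → L₊. Suppose there exist nonempty countable families S₊ and S₋ of linear orders and dense colorings χ₊ : ℚ → S₊ and χ₋ : ℚ → S₋ of (ℚ,<) such that L₊ is order isomorphic to the ordered sum Σ_{q ∈ ℚ} χ₊(q) and L₋ is order isomorphic to the ordered sum Σ_{q ∈ ℚ} χ₋(q). Then L₊ and L₋ are order isomorphic. -/

import Mathlib

/-- A coloring `χ : L → ι` of a linear order `L` is *dense* if for every color `i`
and all `x < x'` in `L` there is `y` with `x < y < x'` and `χ y = i`. -/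
def DenseColoring {L : Type*} [LinearOrder L] {ι : Type*} (χ : L → ι) : Prop :=
  ∀ i : ι, ∀ x x' : L, x < x' → ∃ y : L, x < y ∧ y < x' ∧ χ y = i

/-- A subset `A` of a linear order is *convex* if every element outside `A`
lies entirely below or entirely above `A`. -/
def IsConvexSet {L : Type*} [LinearOrder L] (A : Set L) : Prop :=
  ∀ a ∉ A, (∀ x ∈ A, a < x) ∨ (∀ x ∈ A, x < a)

/-!
A shuffle `L` embeds convexly into each of its open rays: a ray of `ℚ` inherits a dense coloring,
so a back-and-forth argument identifies it with `ℚ` by a color-preserving isomorphism. This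
self-similarity suffices to compare two orders. Let `L` and `M` be countable, convex-biembeddable
and convexly embeddable in their own open rays. In either order, call two points near if the
interval between them contains no convex copy of `L`. Nearness is a convex equivalence relation
with dense, endless quotients. An interval that is not collapsed contains convex copies of both `L`
and `M`, and convex embeddings carry nearness classes onto nearness classes, so every order type of
a class occurs densely in both quotients. Back-and-forth matches the quotients along isomorphic
classes, and gluing the isomorphisms between classes gives `L ≃o M`.
-/

open Set

section BackAndForth

variable {α β : Type*} {R : α → β → Prop}

/-- A relation `R` is *dense* if the points related to any given point meet every open interval;
this is the hypothesis that drives the "forth" direction of a back-and-forth argument. -/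
def IsDenseRel [LT β] (R : α → β → Prop) : Prop :=
  ∀ a, ∀ x y : β, x < y → ∃ b, x < b ∧ b < y ∧ R a b

theorem IsDenseRel.exists_between_finsets [LinearOrder β] [NoMinOrder β] [NoMaxOrder β]
    [Nonempty β] (hR : IsDenseRel R) (a : α) {lo hi : Finset β} (h : ∀ x ∈ lo, ∀ y ∈ hi, x < y) :
    ∃ b, R a b ∧ (∀ x ∈ lo, x < b) ∧ ∀ y ∈ hi, b < y := by
  have : DenselyOrdered β := ⟨fun x y hxy ↦
    let ⟨b, hxb, hby, _⟩ := hR a x y hxy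
    ⟨b, hxb, hby⟩⟩
  obtain ⟨m, hlo, hm⟩ := Order.exists_between_finsets lo hi h
  obtain ⟨m', hm', hhi⟩ := Order.exists_between_finsets {m} hi (by simpa using hm)
  obtain ⟨b, hmb, hbm', hab⟩ := hR a m m' (hm' m (Finset.mem_singleton_self m))
  exact ⟨b, hab, fun x hx ↦ (hlo x hx).trans hmb, fun y hy ↦ hbm'.trans (hhi y hy)⟩

variable [LinearOrder α] [LinearOrder β]

/-- Finite partial order isomorphisms whose graph is contained in the relation `R`: the finite
approximations of an order isomorphism contained in `R`. -/
def RelPartialIso (R : α → β → Prop) : Type _ :=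
  {f : Order.PartialIso α β // ∀ p ∈ f.val, R p.1 p.2}

namespace RelPartialIso

instance : Preorder (RelPartialIso R) :=
  inferInstanceAs (Preorder (Subtype _))

instance : Inhabited (RelPartialIso R) :=
  ⟨⟨⟨∅, by simp⟩, by simp⟩⟩

theorem exists_across [NoMinOrder β] [NoMaxOrder β] [Nonempty β] (hR : IsDenseRel R)
    (f : RelPartialIso R) (a : α) : ∃ b, R a b ∧ ∀ p ∈ f.1.1, cmp p.1 a = cmp p.2 b := by
  classical
  by_cases h : ∃ b, (a, b) ∈ f.1.1
  · obtain ⟨b, hb⟩ := h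
    exact ⟨b, f.2 _ hb, fun p hp ↦ f.1.2 _ hp _ hb⟩
  have images_lt : ∀ x ∈ {p ∈ f.1.1 | p.1 < a}.image Prod.snd,
      ∀ y ∈ {p ∈ f.1.1 | a < p.1}.image Prod.snd, x < y := by
    simp only [Finset.forall_mem_image, Finset.mem_filter]
    rintro p ⟨hp, hpa⟩ q ⟨hq, haq⟩
    exact (lt_iff_lt_of_cmp_eq_cmp (f.1.2 p hp q hq)).1 (hpa.trans haq)
  obtain ⟨b, hab, hlo, hhi⟩ := hR.exists_between_finsets a images_lt
  simp only [Finset.forall_mem_image, Finset.mem_filter] at hlo hhi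
  refine ⟨b, hab, fun p hp ↦ ?_⟩
  have hpa : p.1 ≠ a := fun hpa ↦ h ⟨p.2, hpa ▸ hp⟩
  rcases hpa.lt_or_gt with hlt | hgt
  · rw [(cmp_eq_lt_iff _ _).2 hlt, (cmp_eq_lt_iff _ _).2 (hlo ⟨hp, hlt⟩)]
  · rw [(cmp_eq_gt_iff _ _).2 hgt, (cmp_eq_gt_iff _ _).2 (hhi ⟨hp, hgt⟩)]

theorem exists_le_mem (f : RelPartialIso R) {a : α} {b : β} (hab : R a b)
    (h : ∀ p ∈ f.1.1, cmp p.1 a = cmp p.2 b) : ∃ g : RelPartialIso R, (a, b) ∈ g.1.1 ∧ f ≤ g := by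
  classical
  refine ⟨⟨⟨insert (a, b) f.1.1, ?_⟩, ?_⟩, Finset.mem_insert_self _ _, Finset.subset_insert _ _⟩
  · simp only [Finset.forall_mem_insert, cmp_self_eq_eq, true_and]
    exact ⟨fun q hq ↦ cmp_eq_cmp_symm.1 (h q hq), fun p hp ↦ ⟨h p hp, f.1.2 p hp⟩⟩
  · exact (Finset.forall_mem_insert _ _ _).2 ⟨hab, f.2⟩

/-- The inverse of a partial isomorphism, which exchanges the "back" and "forth" directions. -/
def symm (f : RelPartialIso R) : RelPartialIso (flip R) :=
  ⟨f.1.comm, Finset.forall_mem_image.2 f.2⟩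

theorem exists_le_defined_left [NoMinOrder β] [NoMaxOrder β] [Nonempty β] (hR : IsDenseRel R)
    (f : RelPartialIso R) (a : α) : ∃ g : RelPartialIso R, (∃ b, (a, b) ∈ g.1.1) ∧ f ≤ g := by
  obtain ⟨b, hab, h⟩ := f.exists_across hR a
  obtain ⟨g, hg, hfg⟩ := f.exists_le_mem hab h
  exact ⟨g, ⟨b, hg⟩, hfg⟩

theorem exists_le_defined_right [NoMinOrder α] [NoMaxOrder α] [Nonempty α]
    (hR : IsDenseRel (flip R)) (f : RelPartialIso R) (b : β) :
    ∃ g : RelPartialIso R, (∃ a, (a, b) ∈ g.1.1) ∧ f ≤ g := by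
  obtain ⟨a, hab, h⟩ := f.symm.exists_across hR b
  obtain ⟨g, hg, hfg⟩ := f.exists_le_mem hab fun p hp ↦
    (h p.swap (Finset.mem_image_of_mem _ hp)).symm
  exact ⟨g, ⟨a, hg⟩, hfg⟩

end RelPartialIso

theorem exists_orderIso_of_isDenseRel
    [Countable α] [NoMinOrder α] [NoMaxOrder α] [Nonempty α]
    [Countable β] [NoMinOrder β] [NoMaxOrder β] [Nonempty β]
    (hR : IsDenseRel R) (hR' : IsDenseRel (flip R)) : ∃ φ : α ≃o β, ∀ a, R a (φ a) := by
  cases nonempty_encodable α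
  cases nonempty_encodable β
  let D : α ⊕ β → Order.Cofinal (RelPartialIso R) := Sum.elim
    (fun a ↦ ⟨{f | ∃ b, (a, b) ∈ f.1.1}, fun f ↦ f.exists_le_defined_left hR a⟩)
    (fun b ↦ ⟨{f | ∃ a, (a, b) ∈ f.1.1}, fun f ↦ f.exists_le_defined_right hR' b⟩)
  let I : Order.Ideal (RelPartialIso R) := Order.idealOfCofinals default D
  have total : ∀ a, ∃ b, ∃ f ∈ I, (a, b) ∈ f.1.1 := fun a ↦
    let ⟨f, ⟨b, hb⟩, hf⟩ := Order.cofinal_meets_idealOfCofinals default D (Sum.inl a)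
    ⟨b, f, hf, hb⟩
  have surj : ∀ b, ∃ a, ∃ f ∈ I, (a, b) ∈ f.1.1 := fun b ↦
    let ⟨f, ⟨a, ha⟩, hf⟩ := Order.cofinal_meets_idealOfCofinals default D (Sum.inr b)
    ⟨a, f, hf, ha⟩
  choose F f hfI hf using total
  choose G g hgI hg using surj
  refine ⟨OrderIso.ofCmpEqCmp F G fun a b ↦ ?_, fun a ↦ (f a).2 _ (hf a)⟩
  obtain ⟨m, -, hfm, hgm⟩ := I.directed _ (hfI a) _ (hgI b)
  exact m.1.2 _ (hfm (hf a)) _ (hgm (hg b))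

end BackAndForth

namespace DenseColoring

variable {α β ι : Type*} [LinearOrder α] [LinearOrder β] {χ : α → ι} {ψ : β → ι}

theorem denselyOrdered (hχ : DenseColoring χ) : DenselyOrdered α :=
  ⟨fun x y hxy ↦
    let ⟨z, hxz, hzy, _⟩ := hχ (χ x) x y hxy
    ⟨z, hxz, hzy⟩⟩

theorem comp_val (hχ : DenseColoring χ) (T : Set α) [T.OrdConnected] :
    DenseColoring fun t : T ↦ χ t := fun i x y hxy ↦ by
  obtain ⟨z, hxz, hzy, hz⟩ := hχ i x y hxy
  exact ⟨⟨z, T.Icc_subset x.2 y.2 ⟨hxz.le, hzy.le⟩⟩, hxz, hzy, hz⟩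

theorem exists_orderIso [Countable α] [NoMinOrder α] [NoMaxOrder α] [Nonempty α]
    [Countable β] [NoMinOrder β] [NoMaxOrder β] [Nonempty β]
    (hχ : DenseColoring χ) (hψ : DenseColoring ψ) : ∃ φ : α ≃o β, ∀ a, ψ (φ a) = χ a :=
  exists_orderIso_of_isDenseRel (R := fun a b ↦ ψ b = χ a) (fun a ↦ hψ (χ a))
    fun b x y hxy ↦ let ⟨a, hxa, hay, ha⟩ := hχ (ψ b) x y hxy; ⟨a, hxa, hay, ha.symm⟩

end DenseColoring

theorem exists_orderEmbedding_of_fiber_orderIso {L M I J : Type*} [LinearOrder L] [LinearOrder M]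
    [LinearOrder I] [LinearOrder J] {p : L → I} (hp : Monotone p) {q : M → J} (hq : Monotone q)
    (φ : I ↪o J) (h : ∀ i, Nonempty (p ⁻¹' {i} ≃o q ⁻¹' {φ i})) :
    ∃ f : L ↪o M, range f = q ⁻¹' range φ := by
  let e := fun i ↦ (h i).some
  let f (x : L) : M := e (p x) ⟨x, rfl⟩
  have f_eq : ∀ i (x : p ⁻¹' {i}), f x = e i x := by
    rintro _ ⟨x, rfl⟩
    rfl
  have q_f : ∀ x, q (f x) = φ (p x) := fun x ↦ (e (p x) ⟨x, rfl⟩).2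
  refine ⟨OrderEmbedding.ofStrictMono f fun x y hxy ↦ ?_, Subset.antisymm ?_ ?_⟩
  · rcases (hp hxy.le).eq_or_lt with hpxy | hpxy
    · rw [f_eq (p y) ⟨x, hpxy⟩, f_eq (p y) ⟨y, rfl⟩]
      exact (e (p y)).strictMono hxy
    · exact hq.reflect_lt (by simpa only [q_f] using φ.strictMono hpxy)
  · rintro _ ⟨x, rfl⟩
    exact ⟨p x, (q_f x).symm⟩
  · rintro y ⟨i, hi⟩
    obtain ⟨x, hx⟩ := (e i).surjective ⟨y, hi.symm⟩
    exact ⟨x, (f_eq i x).trans (congrArg Subtype.val hx)⟩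

theorem isConvexSet_iff_ordConnected {L : Type*} [LinearOrder L] {A : Set L} :
    IsConvexSet A ↔ A.OrdConnected := by
  refine ⟨fun hA ↦ ⟨fun x hx y hy a ha ↦ ?_⟩, fun hA a ha ↦ ?_⟩
  · by_contra haA
    rcases hA a haA with h | h
    · exact (h x hx).not_ge ha.1
    · exact (h y hy).not_ge ha.2
  · by_contra! h
    obtain ⟨⟨x, hx, hxa⟩, y, hy, hay⟩ := h
    exact ha (hA.out hx hy ⟨hxa, hay⟩)

section ConvexCopy

variable {K L M N : Type*} [LinearOrder K] [LinearOrder L] [LinearOrder M] [LinearOrder N]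

theorem ordConnected_image_of_ordConnected_range {g : M ↪o N} (hg : (range g).OrdConnected)
    {s : Set M} (hs : s.OrdConnected) : (g '' s).OrdConnected := by
  refine ⟨?_⟩
  rintro _ ⟨x, hx, rfl⟩ _ ⟨y, hy, rfl⟩
  rw [← g.image_Icc hg]
  exact image_mono (hs.out hx hy)

theorem image_uIcc_of_ordConnected_range {g : M ↪o N} (hg : (range g).OrdConnected) (x y : M) :
    g '' uIcc x y = uIcc (g x) (g y) := by
  rw [uIcc, g.image_Icc hg, g.monotone.map_inf, g.monotone.map_sup, uIcc]

/-- The set `s` contains the image of a convex embedding of `K`. Convexity of the image is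
expressed by `Set.OrdConnected`. -/
def HasConvexCopy (K : Type*) [LinearOrder K] (s : Set M) : Prop :=
  ∃ f : K ↪o M, (range f).OrdConnected ∧ range f ⊆ s

namespace HasConvexCopy

theorem mono {s t : Set M} (h : HasConvexCopy K s) (hst : s ⊆ t) : HasConvexCopy K t :=
  let ⟨f, hf, hfs⟩ := h
  ⟨f, hf, hfs.trans hst⟩

theorem refl (K : Type*) [LinearOrder K] : HasConvexCopy K (univ : Set K) :=
  ⟨RelEmbedding.refl _, by simpa using ordConnected_univ, subset_univ _⟩

theorem image {s : Set M} (h : HasConvexCopy K s) {g : M ↪o N} (hg : (range g).OrdConnected) :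
    HasConvexCopy K (g '' s) := by
  obtain ⟨f, hf, hfs⟩ := h
  refine ⟨f.trans g, ?_, ?_⟩ <;> rw [RelEmbedding.coe_trans, range_comp]
  · exact ordConnected_image_of_ordConnected_range hg hf
  · exact image_mono hfs

theorem of_image {s : Set M} {g : M ↪o N} (h : HasConvexCopy K (g '' s)) : HasConvexCopy K s := by
  obtain ⟨f, hf, hfs⟩ := h
  choose k hks hk using fun t ↦ hfs (mem_range_self t)
  have range_k : range k = g ⁻¹' range f := by
    ext x
    simp only [mem_range, mem_preimage, ← hk, g.injective.eq_iff]
  refine ⟨OrderEmbedding.ofMapLEIff k fun a b ↦ ?_, ?_, range_subset_iff.2 hks⟩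
  · rw [← g.le_iff_le, hk, hk, f.le_iff_le]
  · exact range_k ▸ hf.preimage_mono g.monotone

theorem trans {s : Set M} (hKL : HasConvexCopy K (univ : Set L)) (hL : HasConvexCopy L s) :
    HasConvexCopy K s := by
  obtain ⟨f, hf, hfs⟩ := hL
  exact (hKL.image hf).mono ((image_subset_range f _).trans hfs)

end HasConvexCopy

/-- Every open ray of `M` contains a convex copy of `K`. This is the only property of shuffles
that the comparison of two convex-biembeddable orders needs. -/
def EmbedsInRays (K M : Type*) [LinearOrder K] [LinearOrder M] : Prop :=
  ∀ z : M, HasConvexCopy K (Iio z) ∧ HasConvexCopy K (Ioi z)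

theorem EmbedsInRays.of_hasConvexCopy (hKL : HasConvexCopy K (univ : Set L))
    (hL : EmbedsInRays L M) : EmbedsInRays K M := fun z ↦
  ⟨hKL.trans (hL z).1, hKL.trans (hL z).2⟩

theorem HasConvexCopy.inter_Iio_or_inter_Ioi (hK : EmbedsInRays K K) {s : Set M}
    (h : HasConvexCopy K s) (y : M) :
    HasConvexCopy K (s ∩ Iio y) ∨ HasConvexCopy K (s ∩ Ioi y) := by
  obtain ⟨f, hf, hfs⟩ := h
  by_cases hy : y ∈ range f
  · obtain ⟨t, rfl⟩ := hy
    refine Or.inl (((hK t).1.image hf).mono ?_)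
    rintro _ ⟨u, hu, rfl⟩
    exact ⟨hfs ⟨u, rfl⟩, f.strictMono hu⟩
  · rcases isConvexSet_iff_ordConnected.2 hf y hy with hgt | hlt
    · exact Or.inr ⟨f, hf, subset_inter hfs hgt⟩
    · exact Or.inl ⟨f, hf, subset_inter hfs hlt⟩

/-- Two points are *near* relative to `K` if the closed interval between them contains no convex
copy of `K`. -/
def ConvexlyNear (K : Type*) [LinearOrder K] (x y : M) : Prop :=
  ¬HasConvexCopy K (uIcc x y)

namespace ConvexlyNear

variable {x y z : M}

theorem mono {x' y' : M} (h : ConvexlyNear K x y) (hxy : uIcc x' y' ⊆ uIcc x y) :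
    ConvexlyNear K x' y' :=
  mt (HasConvexCopy.mono · hxy) h

theorem refl [Nonempty K] (hK : EmbedsInRays K K) (x : M) : ConvexlyNear K x x := by
  rintro ⟨f, -, hfx⟩
  obtain ⟨t⟩ := ‹Nonempty K›
  obtain ⟨u, -, hu⟩ := (hK t).1
  rw [uIcc_self, range_subset_singleton] at hfx
  exact (f.strictMono (hu ⟨t, rfl⟩)).ne (by rw [hfx, Function.const_apply, Function.const_apply])

theorem symm (h : ConvexlyNear K x y) : ConvexlyNear K y x := by
  rwa [ConvexlyNear, uIcc_comm]

theorem trans (hK : EmbedsInRays K K) (hxy : ConvexlyNear K x y) (hyz : ConvexlyNear K y z) :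
    ConvexlyNear K x z := by
  wlog hxz : x ≤ z generalizing x z
  · exact (this hyz.symm hxy.symm (le_of_not_ge hxz)).symm
  intro h
  rw [uIcc_of_le hxz] at h
  rcases h.inter_Iio_or_inter_Ioi hK y with h | h
  · exact hxy (h.mono fun w hw ↦ mem_uIcc_of_le hw.1.1 (mem_Iio.1 hw.2).le)
  · exact hyz (h.mono fun w hw ↦ mem_uIcc_of_le (mem_Ioi.1 hw.2).le hw.1.2)

theorem map_iff {g : M ↪o N} (hg : (range g).OrdConnected) :
    ConvexlyNear K (g x) (g y) ↔ ConvexlyNear K x y := by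
  rw [ConvexlyNear, ConvexlyNear, ← image_uIcc_of_ordConnected_range hg]
  exact not_congr ⟨.of_image, (.image · hg)⟩

theorem not_of_forall_le (hM : EmbedsInRays K M) {g : M ↪o N} (hg : (range g).OrdConnected) {x : N}
    (hx : ∀ t, x ≤ g t) (z : M) : ¬ConvexlyNear K x (g z) :=
  not_not.2 (((hM z).1.image hg).mono (image_subset_iff.2 fun t ht ↦
    mem_uIcc_of_le (hx t) (g.monotone (mem_Iio.1 ht).le)))

theorem not_of_forall_ge (hM : EmbedsInRays K M) {g : M ↪o N} (hg : (range g).OrdConnected) {y : N}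
    (hy : ∀ t, g t ≤ y) (z : M) : ¬ConvexlyNear K (g z) y :=
  not_not.2 (((hM z).2.image hg).mono (image_subset_iff.2 fun t ht ↦
    mem_uIcc_of_le (g.monotone (mem_Ioi.1 ht).le) (hy t)))

theorem mem_range (hM : EmbedsInRays K M) {g : M ↪o N} (hg : (range g).OrdConnected) {z : M}
    {w : N} (h : ConvexlyNear K (g z) w) : w ∈ range g := by
  by_contra hw
  rcases isConvexSet_iff_ordConnected.2 hg w hw with hgt | hlt
  · exact not_of_forall_le hM hg (fun t ↦ (hgt _ ⟨t, rfl⟩).le) z h.symm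
  · exact not_of_forall_ge hM hg (fun t ↦ (hlt _ ⟨t, rfl⟩).le) z h

theorem image_setOf (hM : EmbedsInRays K M) {g : M ↪o N} (hg : (range g).OrdConnected) (z : M) :
    g '' {x | ConvexlyNear K z x} = {y | ConvexlyNear K (g z) y} := by
  refine Subset.antisymm (image_subset_iff.2 fun x hx ↦ (map_iff hg).2 hx) fun y hy ↦ ?_
  obtain ⟨x, rfl⟩ := hy.mem_range hM hg
  exact ⟨x, (map_iff hg).1 hy, rfl⟩

end ConvexlyNear

variable [Nonempty K]

/-- Nearness relative to `K`, as an equivalence relation. -/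
def nearSetoid (hK : EmbedsInRays K K) (M : Type*) [LinearOrder M] : Setoid M :=
  ⟨ConvexlyNear K, .refl hK, .symm, .trans hK⟩

/-- The condensation of `M` that collapses each class of points near to one another relative to
`K`; nearness classes are convex, so it is linearly ordered. -/
abbrev NearCondensation (hK : EmbedsInRays K K) (M : Type*) [LinearOrder M] : Type _ :=
  Quotient (nearSetoid hK M)

namespace NearCondensation

variable (hK : EmbedsInRays K K)

theorem mk_preimage_singleton (z : M) :
    Quotient.mk (nearSetoid hK M) ⁻¹' {⟦z⟧} = {x | ConvexlyNear K z x} :=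
  ext fun _ ↦ Quotient.eq.trans ⟨.symm, .symm⟩

instance (i : NearCondensation hK M) : (Quotient.mk (nearSetoid hK M) ⁻¹' {i}).OrdConnected := by
  induction i using Quotient.ind with | _ z
  rw [mk_preimage_singleton]
  exact ordConnected_of_uIcc_subset_left fun y hy x hx ↦
    hy.mono (uIcc_subset_uIcc_left hx)

open scoped Classical in
noncomputable instance : LinearOrder (NearCondensation hK M) :=
  Quotient.instLinearOrder

instance [Nonempty M] : Nonempty (NearCondensation hK M) :=
  ‹Nonempty M›.map (Quotient.mk _)

theorem mk_lt_mk_of_le {x y : M} (hxy : x ≤ y) (h : ¬ConvexlyNear K x y) :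
    (⟦x⟧ : NearCondensation hK M) < ⟦y⟧ :=
  (Quotient.mk_monotone hxy).lt_of_ne (h <| Quotient.exact ·)

theorem noMinOrder (hM : EmbedsInRays K M) : NoMinOrder (NearCondensation hK M) := by
  refine ⟨Quotient.ind fun z ↦ ?_⟩
  obtain ⟨g, hg, hgz⟩ := (hM z).1
  obtain ⟨t⟩ := ‹Nonempty K›
  have g_le : ∀ u, g u ≤ z := fun u ↦ (mem_Iio.1 (hgz ⟨u, rfl⟩)).le
  exact ⟨⟦g t⟧, mk_lt_mk_of_le hK (g_le t) (ConvexlyNear.not_of_forall_ge hK hg g_le t)⟩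

theorem noMaxOrder (hM : EmbedsInRays K M) : NoMaxOrder (NearCondensation hK M) := by
  refine ⟨Quotient.ind fun z ↦ ?_⟩
  obtain ⟨g, hg, hgz⟩ := (hM z).2
  obtain ⟨t⟩ := ‹Nonempty K›
  have le_g : ∀ u, z ≤ g u := fun u ↦ (mem_Ioi.1 (hgz ⟨u, rfl⟩)).le
  exact ⟨⟦g t⟧, mk_lt_mk_of_le hK (le_g t) (ConvexlyNear.not_of_forall_le hK hg le_g t)⟩

theorem isDenseRel_fiber_orderIso (hM : EmbedsInRays K M) (hMK : HasConvexCopy M (univ : Set K)) :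
    IsDenseRel fun (i : NearCondensation hK M) (j : NearCondensation hK N) ↦
      Nonempty (Quotient.mk _ ⁻¹' {i} ≃o Quotient.mk _ ⁻¹' {j}) := by
  refine Quotient.ind fun z ↦ Quotient.ind₂ fun x y hxy ↦ ?_
  obtain ⟨hlt, hnear⟩ := Quotient.mk_lt_mk.1 hxy
  obtain ⟨g, hg, hgxy⟩ := hMK.trans (not_not.1 hnear)
  rw [uIcc_of_le hlt.le, range_subset_iff] at hgxy
  have hxz : ¬ConvexlyNear K x (g z) :=
    ConvexlyNear.not_of_forall_le hM hg (fun t ↦ (hgxy t).1) z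
  have hzy : ¬ConvexlyNear K (g z) y :=
    ConvexlyNear.not_of_forall_ge hM hg (fun t ↦ (hgxy t).2) z
  refine ⟨⟦g z⟧, mk_lt_mk_of_le hK (hgxy z).1 hxz, mk_lt_mk_of_le hK (hgxy z).2 hzy, ?_⟩
  beta_reduce
  rw [mk_preimage_singleton, mk_preimage_singleton, ← ConvexlyNear.image_setOf hM hg]
  exact ⟨(g.strictMono.strictMonoOn _).orderIso g _⟩

end NearCondensation

end ConvexCopy

section Comparison

variable {L M : Type*} [LinearOrder L] [LinearOrder M] [Countable L]

theorem nonempty_orderIso_of_embedsInRays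
    (hLM : HasConvexCopy L (univ : Set M)) (hML : HasConvexCopy M (univ : Set L))
    (hL : EmbedsInRays L L) (hM : EmbedsInRays M M) : Nonempty (L ≃o M) := by
  rcases isEmpty_or_nonempty L with hLe | hLn
  · have : IsEmpty M := Function.isEmpty hML.choose
    exact ⟨OrderIso.ofIsEmpty L M⟩
  have : Nonempty M := hLn.map hLM.choose
  have : Countable M := hML.choose.injective.countable
  have hLrays : EmbedsInRays L M := hM.of_hasConvexCopy hLM
  have := NearCondensation.noMinOrder hL hL
  have := NearCondensation.noMaxOrder hL hL
  have := NearCondensation.noMinOrder hL hLrays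
  have := NearCondensation.noMaxOrder hL hLrays
  obtain ⟨φ, hφ⟩ := exists_orderIso_of_isDenseRel
    (NearCondensation.isDenseRel_fiber_orderIso (N := M) hL hL (.refl L))
    fun j x y hxy ↦
      let ⟨i, hxi, hiy, ⟨e⟩⟩ :=
        NearCondensation.isDenseRel_fiber_orderIso (N := L) hL hLrays hML j x y hxy
      ⟨i, hxi, hiy, ⟨e.symm⟩⟩
  obtain ⟨F, hF⟩ := exists_orderEmbedding_of_fiber_orderIso Quotient.mk_monotone
    Quotient.mk_monotone φ.toOrderEmbedding hφ
  refine ⟨RelIso.ofSurjective F (range_eq_univ.1 ?_)⟩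
  rw [hF, OrderIso.coe_toOrderEmbedding, φ.range_eq, preimage_univ]

end Comparison

section Shuffle

variable {L I ι : Type*} [LinearOrder L] [LinearOrder I]

theorem monotone_fst_comp_orderIso {F : I → Type*} [∀ i, LinearOrder (F i)]
    (e : L ≃o Σₗ i, F i) : Monotone fun x ↦ (e x).1 := fun _ _ hxy ↦
  (Sigma.Lex.le_def.1 (e.monotone hxy)).elim le_of_lt fun ⟨h, _⟩ ↦ h.le

theorem nonempty_orderIso_preimage_fst {F : I → Type*} [∀ i, LinearOrder (F i)]
    (e : L ≃o Σₗ i, F i) (i : I) : Nonempty (F i ≃o (fun x ↦ (e x).1) ⁻¹' {i}) := by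
  refine ⟨StrictMono.orderIsoOfSurjective
    (fun a ↦ ⟨e.symm (toLex ⟨i, a⟩), by rw [mem_preimage, e.apply_symm_apply]; rfl⟩)
    (fun a b hab ↦ e.symm.strictMono (Sigma.Lex.right a b hab)) ?_⟩
  rintro ⟨x, rfl⟩
  exact ⟨(e x).2, Subtype.ext (e.symm_apply_apply x)⟩

variable [Countable I] {χ : I → ι} {p : L → I}

theorem hasConvexCopy_preimage (hχ : DenseColoring χ) (hp : Monotone p)
    (hfib : ∀ i j, χ i = χ j → Nonempty (p ⁻¹' {i} ≃o p ⁻¹' {j}))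
    [NoMinOrder I] [NoMaxOrder I] (T : Set I) [hT : T.OrdConnected] [NoMinOrder T]
    [NoMaxOrder T] [Nonempty T] : HasConvexCopy L (p ⁻¹' T) := by
  have : Nonempty I := ‹Nonempty T›.map Subtype.val
  obtain ⟨φ, hφ⟩ := hχ.exists_orderIso (hχ.comp_val T)
  let ψ : I ↪o I := φ.toOrderEmbedding.trans (OrderEmbedding.subtype (· ∈ T))
  have range_ψ : range ψ = T := by
    rw [RelEmbedding.coe_trans, range_comp, OrderIso.coe_toOrderEmbedding, φ.range_eq, image_univ]
    exact Subtype.range_coe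
  obtain ⟨f, hf⟩ := exists_orderEmbedding_of_fiber_orderIso hp hp ψ
    fun i ↦ hfib i (φ i) (hφ i).symm
  rw [range_ψ] at hf
  exact ⟨f, hf ▸ hT.preimage_mono hp, hf.subset⟩

theorem embedsInRays_of_denseColoring [NoMinOrder I] [NoMaxOrder I] (hχ : DenseColoring χ)
    (hp : Monotone p) (hfib : ∀ i j, χ i = χ j → Nonempty (p ⁻¹' {i} ≃o p ⁻¹' {j})) :
    EmbedsInRays L L := fun z ↦ by
  have := hχ.denselyOrdered
  exact ⟨(hasConvexCopy_preimage hχ hp hfib (Iio (p z))).mono fun _ ↦ hp.reflect_lt,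
    (hasConvexCopy_preimage hχ hp hfib (Ioi (p z))).mono fun _ ↦ hp.reflect_lt⟩

theorem embedsInRays_of_orderIso_shuffle [NoMinOrder I] [NoMaxOrder I] {S : ι → Type*}
    [∀ s, LinearOrder (S s)] (hχ : DenseColoring χ) (e : L ≃o Σₗ i, S (χ i)) :
    EmbedsInRays L L := by
  refine embedsInRays_of_denseColoring hχ (monotone_fst_comp_orderIso e) fun i j hij ↦ ?_
  obtain ⟨ei⟩ := nonempty_orderIso_preimage_fst e i
  obtain ⟨ej⟩ := nonempty_orderIso_preimage_fst e j
  have : Nonempty (S (χ i) ≃o S (χ j)) := hij ▸ ⟨.refl _⟩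
  exact this.map fun s ↦ ei.symm.trans (s.trans ej)

end Shuffle

/-- Any two convex-biembeddable countable linear orders that are both (isomorphic to)
shuffles of nonempty countable families of linear orders are order isomorphic. -/
theorem csb_for_countable_shuffles
    {Lp Lm : Type*} [LinearOrder Lp] [LinearOrder Lm] [Countable Lp] [Countable Lm]
    (fp : Lp ↪o Lm) (hfp : IsConvexSet (Set.range fp))
    (fm : Lm ↪o Lp) (hfm : IsConvexSet (Set.range fm))
    {ιp ιm : Type*} [Nonempty ιp] [Countable ιp] [Nonempty ιm] [Countable ιm]
    (Sp : ιp → Type*) [∀ i, LinearOrder (Sp i)]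
    (Sm : ιm → Type*) [∀ i, LinearOrder (Sm i)]
    (χp : ℚ → ιp) (hχp : DenseColoring χp)
    (χm : ℚ → ιm) (hχm : DenseColoring χm)
    (hp : Nonempty (Lp ≃o Σₗ q : ℚ, Sp (χp q)))
    (hm : Nonempty (Lm ≃o Σₗ q : ℚ, Sm (χm q))) :
    Nonempty (Lp ≃o Lm) := by
  have hpm : HasConvexCopy Lp (univ : Set Lm) :=
    ⟨fp, isConvexSet_iff_ordConnected.1 hfp, subset_univ _⟩
  have hmp : HasConvexCopy Lm (univ : Set Lp) :=
    ⟨fm, isConvexSet_iff_ordConnected.1 hfm, subset_univ _⟩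
  obtain ⟨ep⟩ := hp
  obtain ⟨em⟩ := hm
  exact nonempty_orderIso_of_embedsInRays hpm hmp (embedsInRays_of_orderIso_shuffle hχp ep)
    (embedsInRays_of_orderIso_shuffle hχm em)
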